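/- For all real s > 0 and s' > 2 there exists a constant C > 0 with the following property. Let S be the kernel S(k,ℓ) = Λ(k,ℓ)/|kℓ(k+ℓ)|^{1/2} if kℓ(k+ℓ) ≠ 0 and 0 otherwise, with Λ(k,ℓ) = 2|k+ℓ|·|k|·|ℓ|/(|k+ℓ|+|k|+|ℓ|) for (k,ℓ)≠(0,0) and Λ(0,0)=0. For every measurable f:ℝ→ℂ with f(−k) = conj(f(k)) almost everywhere, with ‖f‖₀, ‖f‖_s, ‖f‖_{s'} all finite (where ‖f‖_r := (∫_ℝ |k|^{2r}|f(k)|² dk)^{1/2}), and such that (k,ℓ) ↦ (|k|^{2s+1}+|k−ℓ|^{2s+1}+|ℓ|^{2s+1})|S(k−ℓ,ℓ)||f(k−ℓ)||f(ℓ)||f(−k)| is integrable on ℝ², one has | ∬_{ℝ²} k|k|^{2s} S(k−ℓ,ℓ) f(k−ℓ) f(ℓ) f(−k) dℓ dk | ≤ C · ‖f‖₀^{1−2/s'} · ‖f‖_{s'}^{2/s'} · ‖f‖_s². -/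

import Mathlib

open MeasureTheory

/-- The kernel `Λ` of the surface-wave amplitude equation. -/
noncomputable def Lam (k l : ℝ) : ℝ :=
  if (k, l) = ((0 : ℝ), (0 : ℝ)) then 0
  else 2 * |k + l| * |k| * |l| / (|k + l| + |k| + |l|)

/-- The kernel `S` of the noncanonical form of the amplitude equation. -/
noncomputable def Sker (k l : ℝ) : ℝ :=
  if k * l * (k + l) ≠ 0 then Lam k l / Real.sqrt |k * l * (k + l)| else 0

lemma phi_base (p : ℝ) (hp : 0 ≤ p) (x y : ℝ) (hy : 0 ≤ y) (hxy : y ≤ x) :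
    x * x ^ p - y * y ^ p ≤ (p + 1) * x ^ p * (x - y) := by
  rcases (hy.trans hxy).eq_or_lt with h | h
  · have : y = 0 := by linarith
    subst this; subst h; simp
  have hB := one_add_mul_self_le_rpow_one_add (s := y / x - 1) (by
    have : 0 ≤ y / x := by positivity
    linarith) (p := p + 1) (by linarith)
  have e1 : 1 + (y / x - 1) = y / x := by ring
  rw [e1, Real.div_rpow hy h.le, Real.rpow_add_one' hy (by linarith),
    Real.rpow_add_one' h.le (by linarith), le_div_iff₀ (by positivity)] at hB
  have e2 : (1 + (p + 1) * (y / x - 1)) * (x ^ p * x) = x * x ^ p + (p+1) * x ^ p * (y - x) := by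
    field_simp
  rw [e2] at hB
  linarith

lemma phi_lip_aux (p : ℝ) (hp : 0 ≤ p) (x y M : ℝ) (hx : |x| ≤ M) (hy : |y| ≤ M) (hxy : y ≤ x) :
    |x * |x| ^ p - y * |y| ^ p| ≤ (p + 1) * M ^ p * |x - y| := by
  have hM : 0 ≤ M := (abs_nonneg x).trans hx
  have hxM : |x| ^ p ≤ M ^ p := Real.rpow_le_rpow (abs_nonneg _) hx hp
  have hyM : |y| ^ p ≤ M ^ p := Real.rpow_le_rpow (abs_nonneg _) hy hp
  have hxp : 0 ≤ |x| ^ p := by positivity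
  have hyp : 0 ≤ |y| ^ p := by positivity
  have hMp : 0 ≤ M ^ p := by positivity
  rw [abs_of_nonneg (sub_nonneg.2 hxy)]
  rcases le_total 0 y with h | h
  · have hx0 := h.trans hxy
    have := phi_base p hp x y h hxy
    rw [abs_of_nonneg h, abs_of_nonneg hx0] at *
    have hm : y ^ p ≤ x ^ p := Real.rpow_le_rpow h hxy hp
    rw [abs_of_nonneg]
    · refine this.trans ?_
      have : 0 ≤ x - y := by linarith
      gcongr
    · have : y * y ^ p ≤ x * x ^ p := by gcongr
      linarith
  rcases le_total 0 x with h' | h'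
  · have h1 : x * |x| ^ p ≤ x * M ^ p := by gcongr
    have h2 : (-y) * |y| ^ p ≤ (-y) * M ^ p := mul_le_mul_of_nonneg_left hyM (by linarith)
    have h3 : 0 ≤ x * |x| ^ p := by positivity
    have h4 : 0 ≤ (-y) * |y| ^ p := mul_nonneg (by linarith) hyp
    have h5 : 0 ≤ p * M ^ p * (x - y) := mul_nonneg (by positivity) (by linarith)
    rw [abs_of_nonneg (by linarith)]
    linarith
  · have := phi_base p hp (-y) (-x) (by linarith) (by linarith)
    rw [abs_of_nonpos h, abs_of_nonpos h'] at *
    have hm : (-x) ^ p ≤ (-y) ^ p := Real.rpow_le_rpow (by linarith) (by linarith) hp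
    rw [abs_of_nonneg]
    · have h6 : (p + 1) * (-y) ^ p * (-y - -x) ≤ (p + 1) * M ^ p * (-y - -x) := by
        have : 0 ≤ -y - -x := by linarith
        gcongr
      linarith
    · have : (-x) * (-x) ^ p ≤ (-y) * (-y) ^ p := 
        mul_le_mul (by linarith) hm hxp (by linarith)
      linarith

lemma phi_lip (p : ℝ) (hp : 0 ≤ p) (x y M : ℝ) (hx : |x| ≤ M) (hy : |y| ≤ M) :
    |x * |x| ^ p - y * |y| ^ p| ≤ (p + 1) * M ^ p * |x - y| := by
  rcases le_total y x with h | h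
  · exact phi_lip_aux p hp x y M hx hy h
  · rw [abs_sub_comm, abs_sub_comm x y]
    exact phi_lip_aux p hp y x M hy hx h

lemma core_bound (s : ℝ) (hs : 0 < s) (a b c : ℝ) (h0 : a + b + c = 0) (h1 : |b| ≤ |a|)
    (h2 : |a| ≤ |c|) :
    |a * |a| ^ (2 * s) + b * |b| ^ (2 * s) + c * |c| ^ (2 * s)| *
      (2 * Real.sqrt |a * b * c| / (|a| + |b| + |c|)) ≤
    ((2 * s + 1) * 2 ^ s + 1) * (|b| * Real.sqrt |b| * |a| ^ s * |c| ^ s) := by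
  have hc : |c| ≤ 2 * |a| := by
    have : c = -(a + b) := by linarith
    rw [this, abs_neg]
    have := abs_add_le a b
    linarith
  have e : ∀ x : ℝ, |x| ^ (2 * s) = |x| ^ s * |x| ^ s := fun x => by
    rw [two_mul, Real.rpow_add_of_nonneg (abs_nonneg _) hs.le hs.le]
  have A : |a * |a| ^ (2 * s) + b * |b| ^ (2 * s) + c * |c| ^ (2 * s)| ≤
      ((2 * s + 1) * 2 ^ s + 1) * (|b| * |a| ^ s * |c| ^ s) := by
    have l1 := phi_lip (2 * s) (by linarith) (-c) a |c| (by simp) h2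
    have : -c - a = b := by linarith
    rw [this, abs_neg] at l1
    have hcs : |c| ^ s ≤ 2 ^ s * |a| ^ s := by
      rw [← Real.mul_rpow (by norm_num) (abs_nonneg _)]
      exact Real.rpow_le_rpow (abs_nonneg _) hc hs.le
    have hba : |b| ^ s ≤ |a| ^ s := Real.rpow_le_rpow (abs_nonneg _) h1 hs.le
    have hbc : |b| ^ s ≤ |c| ^ s := Real.rpow_le_rpow (abs_nonneg _) (h1.trans h2) hs.le
    have l2 : |b * |b| ^ (2 * s)| ≤ |b| * |a| ^ s * |c| ^ s := by
      rw [abs_mul, abs_of_nonneg (by positivity : 0 ≤ |b| ^ (2 * s)), e, mul_assoc]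
      gcongr
    have l3 : (2 * s + 1) * |c| ^ (2 * s) * |b| ≤ (2 * s + 1) * 2 ^ s * (|b| * |a| ^ s * |c| ^ s) := by
      rw [e]
      calc (2 * s + 1) * (|c| ^ s * |c| ^ s) * |b| ≤ (2 * s + 1) * ((2 ^ s * |a| ^ s) * |c| ^ s) * |b| := by
            gcongr
        _ = _ := by ring
    have e3 : a * |a| ^ (2 * s) + b * |b| ^ (2 * s) + c * |c| ^ (2 * s) =
      b * |b| ^ (2 * s) - (-c * |c| ^ (2 * s) - a * |a| ^ (2 * s)) := by ring
    rw [e3]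
    refine (abs_sub _ _).trans ?_
    linarith
  have B : 2 * Real.sqrt |a * b * c| / (|a| + |b| + |c|) ≤ Real.sqrt |b| := by
    apply div_le_of_le_mul₀ (by positivity) (by positivity)
    have : |a * b * c| = |b| * (|a| * |c|) := by rw [abs_mul, abs_mul]; ring
    rw [this, Real.sqrt_mul (abs_nonneg _)]
    have h3 : 2 * Real.sqrt (|a| * |c|) ≤ |a| + |c| := by
      have hh := two_mul_le_add_sq (Real.sqrt |a|) (Real.sqrt |c|)
      rw [Real.sq_sqrt (abs_nonneg _), Real.sq_sqrt (abs_nonneg _)] at hh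
      rw [Real.sqrt_mul (abs_nonneg _)]
      linarith
    have := abs_nonneg b
    calc 2 * (√|b| * √(|a| * |c|)) = √|b| * (2 * √(|a| * |c|)) := by ring
      _ ≤ _ := by gcongr; linarith
  calc _ ≤ ((2 * s + 1) * 2 ^ s + 1) * (|b| * |a| ^ s * |c| ^ s) * Real.sqrt |b| := by gcongr
    _ = _ := by ring

lemma sym_bound (s : ℝ) (hs : 0 < s) (a b c : ℝ) (h0 : a + b + c = 0) :
    |a * |a| ^ (2 * s) + b * |b| ^ (2 * s) + c * |c| ^ (2 * s)| *
      (2 * Real.sqrt |a * b * c| / (|a| + |b| + |c|)) ≤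
    ((2 * s + 1) * 2 ^ s + 1) * (|b| * Real.sqrt |b| * |a| ^ s * |c| ^ s
      + |a| * Real.sqrt |a| * |c| ^ s * |b| ^ s + |c| * Real.sqrt |c| * |b| ^ s * |a| ^ s) := by
  have hK : 0 ≤ (2 * s + 1) * 2 ^ s + 1 := by positivity
  have pa : 0 ≤ ((2 * s + 1) * 2 ^ s + 1) * (|a| * Real.sqrt |a| * |c| ^ s * |b| ^ s) := by positivity
  have pb : 0 ≤ ((2 * s + 1) * 2 ^ s + 1) * (|b| * Real.sqrt |b| * |a| ^ s * |c| ^ s) := by positivity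
  have pc : 0 ≤ ((2 * s + 1) * 2 ^ s + 1) * (|c| * Real.sqrt |c| * |b| ^ s * |a| ^ s) := by positivity
  rw [mul_add, mul_add]
  have key : ∀ x y z : ℝ, x + y + z = 0 → |y| ≤ |x| → |x| ≤ |z| →
     a * |a| ^ (2 * s) + b * |b| ^ (2 * s) + c * |c| ^ (2 * s) = 
      x * |x| ^ (2 * s) + y * |y| ^ (2 * s) + z * |z| ^ (2 * s) → a * b * c = x * y * z →
      |a| + |b| + |c| = |x| + |y| + |z| →
      |a * |a| ^ (2 * s) + b * |b| ^ (2 * s) + c * |c| ^ (2 * s)| *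
      (2 * Real.sqrt |a * b * c| / (|a| + |b| + |c|)) ≤
       ((2 * s + 1) * 2 ^ s + 1) * (|y| * Real.sqrt |y| * |x| ^ s * |z| ^ s) := by
    intro x y z h h1 h2 e1 e2 e3
    rw [e1, e2, e3]
    exact core_bound s hs x y z h h1 h2
  rcases le_total |a| |b| with ab | ab <;> rcases le_total |b| |c| with bc | bc <;>
    rcases le_total |a| |c| with ac | ac
  · have := key b a c (by linarith) ab bc (by ring) (by ring) (by ring); linarith
  · have := key b a c (by linarith) ab bc (by ring) (by ring) (by ring); linarith
  · have := key c a b (by linarith) ac bc (by ring) (by ring) (by ring); linarith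
  · have := key a c b (by linarith) ac ab (by ring) (by ring) (by ring); linarith
  · have := key a b c (by linarith) ab ac (by ring) (by ring) (by ring); linarith
  · have := key c b a (by linarith) bc ac (by ring) (by ring) (by ring); linarith
  · have := key b c a (by linarith) bc ab (by ring) (by ring) (by ring); linarith
  · have := key b c a (by linarith) bc ab (by ring) (by ring) (by ring); linarith

lemma Sker_eq (a b : ℝ) : Sker a b = 2 * Real.sqrt |a * b * (a + b)| / (|a + b| + |a| + |b|) := by
  unfold Sker
  split_ifs with h
  · have ha : a ≠ 0 := by rintro rfl; simp at h
    have hab : ¬ ((a, b) = ((0 : ℝ), (0 : ℝ))) := by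
      intro h; exact ha (congrArg Prod.fst h)
    have hq : 0 < Real.sqrt |a * b * (a + b)| := Real.sqrt_pos.2 (abs_pos.2 h)
    have hsq : Real.sqrt |a * b * (a + b)| * Real.sqrt |a * b * (a + b)| = |a + b| * |a| * |b| := by
      rw [Real.mul_self_sqrt (abs_nonneg _), abs_mul, abs_mul]; ring
    have : 0 < |a| := abs_pos.2 ha
    rw [Lam, if_neg hab, div_div, div_eq_div_iff (by positivity) (by positivity)]
    linear_combination (-2 * (|a + b| + |a| + |b|)) * hsq
  · push Not at h
    simp [h]

lemma Sker_sym (a b c : ℝ) (h : a + b + c = 0) :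
    Sker a b = 2 * Real.sqrt |a * b * c| / (|a| + |b| + |c|) := by
  have : a + b = -c := by linarith
  rw [Sker_eq, this, mul_neg, abs_neg, abs_neg]
  congr 1; ring
lemma cs_lint (u v : ℝ → ℝ) (hu : Measurable u) (hv : Measurable v) (hu0 : ∀ x, 0 ≤ u x)
    (hv0 : ∀ x, 0 ≤ v x) (hui : Integrable (fun x => u x ^ 2)) (hvi : Integrable (fun x => v x ^ 2)) :
    ∫⁻ x, ENNReal.ofReal (u x * v x) ≤
      ENNReal.ofReal (Real.sqrt (∫ x, u x ^ 2) * Real.sqrt (∫ x, v x ^ 2)) := by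
  have h := ENNReal.lintegral_mul_le_Lp_mul_Lq volume Real.HolderConjugate.two_two
    (f := fun x => ENNReal.ofReal (u x)) (g := fun x => ENNReal.ofReal (v x))
    (by fun_prop) (by fun_prop)
  have key : ∀ w : ℝ → ℝ, (∀ x, 0 ≤ w x) → Integrable (fun x => w x ^ 2) →
      (∫⁻ x, ENNReal.ofReal (w x) ^ (2:ℝ)) ^ (1 / (2:ℝ)) = ENNReal.ofReal (Real.sqrt (∫ x, w x ^ 2)) := by
    intro w hw hwi
    have : ∀ x, ENNReal.ofReal (w x) ^ (2:ℝ) = ENNReal.ofReal (w x ^ 2) := fun x => by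
      rw [ENNReal.ofReal_rpow_of_nonneg (hw x) (by norm_num)]
      norm_num
    simp_rw [this]
    rw [← ofReal_integral_eq_lintegral_ofReal hwi (Filter.Eventually.of_forall fun x => by positivity),
      ENNReal.ofReal_rpow_of_nonneg (integral_nonneg fun x => by positivity) (by norm_num),
      Real.sqrt_eq_rpow]
  rw [key u hu0 hui, key v hv0 hvi, ← ENNReal.ofReal_mul (Real.sqrt_nonneg _)] at h
  refine le_trans (le_of_eq ?_) h
  refine lintegral_congr fun x => ?_
  simp [ENNReal.ofReal_mul (hu0 x)]

lemma one_add_rpow_le (q t : ℝ) (hq : 0 ≤ q) (ht : 0 ≤ t) : (1 + t) ^ q ≤ 2 ^ q * (1 + t ^ q) := by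
  have : (1 + t) ≤ 2 * max 1 t := by
    have := le_max_left 1 t
    have := le_max_right 1 t
    linarith
  calc (1 + t) ^ q ≤ (2 * max 1 t) ^ q := Real.rpow_le_rpow (by linarith) this hq
    _ = 2 ^ q * (max 1 t) ^ q := Real.mul_rpow (by norm_num) (by positivity)
    _ ≤ _ := by
      gcongr
      have : 0 ≤ t ^ q := by positivity
      rcases le_total 1 t with h | h
      · rw [max_eq_right h]; linarith
      · rw [max_eq_left h, Real.one_rpow]; linarith

lemma L1_bound (r : ℝ) (hr : 2 < r) : ∃ C : ℝ, 0 < C ∧ ∀ f : ℝ → ℂ, Measurable f →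
    Integrable (fun k : ℝ => ‖f k‖ ^ 2) →
    Integrable (fun k : ℝ => |k| ^ (2 * r) * ‖f k‖ ^ 2) →
    ∫⁻ k, ENNReal.ofReal (|k| * Real.sqrt |k| * ‖f k‖) ≤
      ENNReal.ofReal (C * (Real.sqrt (∫ k : ℝ, ‖f k‖ ^ 2)) ^ (1 - 2 / r) *
          (Real.sqrt (∫ k : ℝ, |k| ^ (2 * r) * ‖f k‖ ^ 2)) ^ (2 / r)) := by
  have hint : Integrable (fun x : ℝ => (1 + |x|) ^ (-(2 * r - 3))) := by
    have := integrable_one_add_norm (E := ℝ) (μ := volume) (r := 2 * r - 3) (by simp; linarith)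
    simpa using this
  set M := ∫ x : ℝ, (1 + |x|) ^ (-(2 * r - 3)) with hM
  have hM0 : 0 ≤ M := integral_nonneg fun x => by positivity
  refine ⟨Real.sqrt (2 * 2 ^ (2 * r) * M) + 1, by positivity, ?_⟩
  intro f hf h0 hr'
  by_cases hz : f =ᵐ[volume] 0
  · have : ∫⁻ k, ENNReal.ofReal (|k| * Real.sqrt |k| * ‖f k‖) = 0 := by
      rw [lintegral_eq_zero_iff (by fun_prop)]
      filter_upwards [hz] with k hk
      simp [hk]
    rw [this]; exact zero_le
  have hA : 0 < ∫ k : ℝ, ‖f k‖ ^ 2 := by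
    refine lt_of_le_of_ne (integral_nonneg fun k => by positivity) fun h => hz ?_
    rw [eq_comm, integral_eq_zero_iff_of_nonneg (fun k => by positivity) h0] at h
    filter_upwards [h] with k hk
    simpa using hk
  have hB : 0 < ∫ k : ℝ, |k| ^ (2 * r) * ‖f k‖ ^ 2 := by
    refine lt_of_le_of_ne (integral_nonneg fun k => by positivity) fun h => hz ?_
    rw [eq_comm, integral_eq_zero_iff_of_nonneg (fun k => by positivity) hr'] at h
    have hne : ∀ᵐ k : ℝ, k ≠ 0 := by simp [ae_iff, measure_singleton]
    filter_upwards [h, hne] with k hk hk0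
    have hp : 0 < |k| ^ (2 * r) := Real.rpow_pos_of_pos (abs_pos.2 hk0) _
    simpa [hp.ne'] using hk
  set A := Real.sqrt (∫ k : ℝ, ‖f k‖ ^ 2) with hAdef
  set B := Real.sqrt (∫ k : ℝ, |k| ^ (2 * r) * ‖f k‖ ^ 2) with hBdef
  have hA2 : ∫ k : ℝ, ‖f k‖ ^ 2 = A ^ 2 := (Real.sq_sqrt hA.le).symm
  have hB2 : ∫ k : ℝ, |k| ^ (2 * r) * ‖f k‖ ^ 2 = B ^ 2 := (Real.sq_sqrt hB.le).symm
  have hA0 : 0 < A := Real.sqrt_pos.2 hA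
  have hB0 : 0 < B := Real.sqrt_pos.2 hB
  set R := (B / A) ^ (1 / r) with hR
  have hR0 : 0 < R := by positivity
  have hRr : R ^ r = B / A := by
    rw [hR, ← Real.rpow_mul (by positivity)]; simp [show r ≠ 0 by linarith]
  have hR2 : R ^ 2 = (B / A) ^ (2 / r) := by
    rw [hR, ← Real.rpow_natCast, ← Real.rpow_mul (by positivity)]; congr 1; push_cast; ring
  have hR2r : R ^ (2 * r) = (B / A) ^ 2 := by
    rw [mul_comm, Real.rpow_mul hR0.le, hRr]; norm_num
  let u : ℝ → ℝ := fun k => R * Real.sqrt R * (1 + |k / R|) ^ (-(r - 3 / 2))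
  let v : ℝ → ℝ := fun k => (1 + |k / R|) ^ r * ‖f k‖
  have u2 : ∀ k, u k ^ 2 = R ^ 3 * (1 + |k / R|) ^ (-(2 * r - 3)) := by
    intro k
    simp only [u]
    rw [mul_pow, mul_pow, Real.sq_sqrt hR0.le, ← Real.rpow_natCast ((1 + |k / R|) ^ (-(r - 3 / 2))), ← Real.rpow_mul (by positivity)]
    rw [show -(r - 3 / 2) * ((2 : ℕ) : ℝ) = -(2 * r - 3) by push_cast; ring]
    ring
  have hui : Integrable (fun k => u k ^ 2) := by
    simp_rw [u2]
    exact (hint.comp_div hR0.ne').const_mul _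
  have hu_int : ∫ k, u k ^ 2 = R ^ 4 * M := by
    simp_rw [u2]
    rw [integral_const_mul, Measure.integral_comp_div (fun x : ℝ => (1 + |x|) ^ (-(2 * r - 3))),
      abs_of_pos hR0, ← hM, smul_eq_mul]
    ring
  have v2 : ∀ k, v k ^ 2 ≤ 2 ^ (2 * r) * ‖f k‖ ^ 2 +
      (2 ^ (2 * r) * (R ^ (2 * r))⁻¹) * (|k| ^ (2 * r) * ‖f k‖ ^ 2) := by
    intro k
    have e : v k ^ 2 = (1 + |k / R|) ^ (2 * r) * ‖f k‖ ^ 2 := by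
      simp only [v]
      rw [mul_pow, ← Real.rpow_natCast (_ ^ _), ← Real.rpow_mul (by positivity)]
      congr 2; push_cast; ring
    have h := one_add_rpow_le (2 * r) |k / R| (by linarith) (abs_nonneg _)
    rw [abs_div, abs_of_pos hR0, Real.div_rpow (abs_nonneg _) hR0.le] at h
    rw [e, abs_div, abs_of_pos hR0]
    calc _ ≤ (2 ^ (2 * r) * (1 + |k| ^ (2 * r) / R ^ (2 * r))) * ‖f k‖ ^ 2 := by gcongr
      _ = _ := by rw [div_eq_mul_inv]; ring
  have hvm : Measurable v := by fun_prop
  have hdom : Integrable (fun k => 2 ^ (2 * r) * ‖f k‖ ^ 2 +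
      (2 ^ (2 * r) * (R ^ (2 * r))⁻¹) * (|k| ^ (2 * r) * ‖f k‖ ^ 2)) :=
    (h0.const_mul _).add (hr'.const_mul _)
  have hvi : Integrable (fun k => v k ^ 2) := by
    refine hdom.mono' (by fun_prop) (Filter.Eventually.of_forall fun k => ?_)
    rw [Real.norm_of_nonneg (by positivity)]
    exact v2 k
  have hv_int : ∫ k, v k ^ 2 ≤ 2 * 2 ^ (2 * r) * A ^ 2 := by
    refine (integral_mono hvi hdom v2).trans (le_of_eq ?_)
    rw [integral_add (h0.const_mul _) (hr'.const_mul _), integral_const_mul, integral_const_mul,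
      hA2, hB2, hR2r]
    field_simp
    try ring
  have hcs := cs_lint u v (by fun_prop) hvm (fun k => by positivity) (fun k => by positivity) hui hvi
  refine (lintegral_mono fun k => ENNReal.ofReal_le_ofReal ?_).trans (hcs.trans (ENNReal.ofReal_le_ofReal ?_))
  · simp only [u, v]
    have e : R * √R * (1 + |k / R|) ^ (-(r - 3 / 2)) * ((1 + |k / R|) ^ r * ‖f k‖) =
        R * √R * ((1 + |k / R|) * √(1 + |k / R|)) * ‖f k‖ := by
      have : (1 + |k / R|) ^ (-(r - 3 / 2)) * (1 + |k / R|) ^ r = (1 + |k / R|) * √(1 + |k / R|) := by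
        rw [← Real.rpow_add (by positivity), Real.sqrt_eq_rpow]
        nth_rewrite 2 [← Real.rpow_one (1 + |k / R|)]
        rw [← Real.rpow_add (by positivity)]
        congr 1; ring
      rw [← this]; ring
    rw [e]
    have hk : |k| ≤ R * (1 + |k / R|) := by
      rw [abs_div, abs_of_pos hR0]
      field_simp
      linarith
    calc |k| * √|k| * ‖f k‖ ≤ (R * (1 + |k / R|)) * √(R * (1 + |k / R|)) * ‖f k‖ := by gcongr
      _ = _ := by rw [Real.sqrt_mul hR0.le]; ring
  · rw [hu_int]
    have hfin : R ^ 2 * A = A ^ (1 - 2 / r) * B ^ (2 / r) := by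
      rw [hR2, Real.div_rpow hB0.le hA0.le, Real.rpow_sub hA0, Real.rpow_one]
      ring
    calc √(R ^ 4 * M) * √(∫ k, v k ^ 2) ≤ √(R ^ 4 * M) * √(2 * 2 ^ (2 * r) * A ^ 2) := by gcongr
      _ = √(2 * 2 ^ (2 * r) * M) * (R ^ 2 * A) := by
        rw [← Real.sqrt_mul (by positivity), show R ^ 4 * M * (2 * 2 ^ (2 * r) * A ^ 2) =
          (2 * 2 ^ (2 * r) * M) * (R ^ 2 * A) ^ 2 by ring, Real.sqrt_mul (by positivity),
          Real.sqrt_sq (by positivity)]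
      _ ≤ (√(2 * 2 ^ (2 * r) * M) + 1) * (R ^ 2 * A) := by
        gcongr; linarith
      _ = _ := by rw [hfin]; ring
lemma tri_lint (s : ℝ) (f : ℝ → ℂ) (hf : Measurable f)
    (hsi : Integrable (fun k : ℝ => |k| ^ (2 * s) * ‖f k‖ ^ 2)) :
    ∫⁻ p : ℝ × ℝ, ENNReal.ofReal (|p.2| * Real.sqrt |p.2| * ‖f p.2‖) *
      ENNReal.ofReal ((|p.1 - p.2| ^ s * ‖f (p.1 - p.2)‖) * (|-p.1| ^ s * ‖f (-p.1)‖)) ≤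
    (∫⁻ k, ENNReal.ofReal (|k| * Real.sqrt |k| * ‖f k‖)) *
      ENNReal.ofReal ((Real.sqrt (∫ k : ℝ, |k| ^ (2 * s) * ‖f k‖ ^ 2)) ^ 2) := by
  have hg2 : ∀ k : ℝ, (|k| ^ s * ‖f k‖) ^ 2 = |k| ^ (2 * s) * ‖f k‖ ^ 2 := fun k => by
    rw [mul_pow, ← Real.rpow_natCast (|k| ^ s), ← Real.rpow_mul (abs_nonneg _)]
    congr 2; push_cast; ring
  have hgi : Integrable (fun k : ℝ => (|k| ^ s * ‖f k‖) ^ 2) := by simpa only [hg2] using hsi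
  rw [Measure.volume_eq_prod, lintegral_prod_symm' _ (by fun_prop),
    ← lintegral_mul_const _ (by fun_prop)]
  refine lintegral_mono fun l => ?_
  dsimp only
  rw [lintegral_const_mul _ (by fun_prop)]
  gcongr
  have h := cs_lint (fun k => |k - l| ^ s * ‖f (k - l)‖) (fun k => |-k| ^ s * ‖f (-k)‖)
    (by fun_prop) (by fun_prop) (fun k => by positivity) (fun k => by positivity)
    (hgi.comp_sub_right l) hgi.comp_neg
  rw [integral_sub_right_eq_self (fun k : ℝ => (|k| ^ s * ‖f k‖) ^ 2) l,
    integral_neg_eq_self (fun k : ℝ => (|k| ^ s * ‖f k‖) ^ 2)] at h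
  simp_rw [hg2] at h
  rwa [← pow_two] at h

lemma mp_tau : MeasurePreserving (fun p : ℝ × ℝ => (-p.2, p.1 - p.2)) := by
  have h1 := measurePreserving_prod_neg_add_swap (volume : Measure ℝ) (volume : Measure ℝ)
  have h2 := (Measure.measurePreserving_neg (volume : Measure ℝ)).prod
    (MeasurePreserving.id (volume : Measure ℝ))
  have h := h2.comp h1
  have e : (fun p : ℝ × ℝ => (-p.2, p.1 - p.2)) =
      (Prod.map Neg.neg id ∘ fun z : ℝ × ℝ => (z.2, -z.2 + z.1)) := by
    funext p
    simp [Prod.map, sub_eq_neg_add]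
  rw [e]
  exact h

lemma measurable_Sker : Measurable (fun p : ℝ × ℝ => Sker (p.1 - p.2) p.2) := by
  simp_rw [Sker_eq]
  fun_prop

theorem trilinear_estimate_blowup (s s' : ℝ) (hs : 0 < s) (hs' : 2 < s') :
    ∃ C : ℝ, 0 < C ∧ ∀ f : ℝ → ℂ, Measurable f →
      (∀ᵐ k : ℝ, f (-k) = (starRingEnd ℂ) (f k)) →
      Integrable (fun k : ℝ => ‖f k‖ ^ 2) →
      Integrable (fun k : ℝ => |k| ^ (2 * s) * ‖f k‖ ^ 2) →
      Integrable (fun k : ℝ => |k| ^ (2 * s') * ‖f k‖ ^ 2) →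
      Integrable (fun p : ℝ × ℝ =>
        (|p.1| ^ (2 * s + 1) + |p.1 - p.2| ^ (2 * s + 1) + |p.2| ^ (2 * s + 1)) *
          |Sker (p.1 - p.2) p.2| * ‖f (p.1 - p.2)‖ * ‖f p.2‖ * ‖f (-p.1)‖) →
      ‖∫ p : ℝ × ℝ, ((p.1 * |p.1| ^ (2 * s) : ℝ) : ℂ) * ((Sker (p.1 - p.2) p.2 : ℝ) : ℂ) *
          f (p.1 - p.2) * f p.2 * f (-p.1)‖ ≤
        C * (Real.sqrt (∫ k : ℝ, ‖f k‖ ^ 2)) ^ (1 - 2 / s') *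
          (Real.sqrt (∫ k : ℝ, |k| ^ (2 * s') * ‖f k‖ ^ 2)) ^ (2 / s') *
          (Real.sqrt (∫ k : ℝ, |k| ^ (2 * s) * ‖f k‖ ^ 2)) ^ 2 := by
  obtain ⟨C, hC, hL1⟩ := L1_bound s' hs'
  set K : ℝ := (2 * s + 1) * 2 ^ s + 1 with hK
  have hK0 : 0 < K := by positivity
  refine ⟨K * C, by positivity, ?_⟩
  intro f hf _ h0 hsi hsi' hint
  have hSm := measurable_Sker
  let F : ℝ × ℝ → ℂ := fun p => ((p.1 * |p.1| ^ (2 * s) : ℝ) : ℂ) * ((Sker (p.1 - p.2) p.2 : ℝ) : ℂ) *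
          f (p.1 - p.2) * f p.2 * f (-p.1)
  let H : ℝ × ℝ → ENNReal := fun p => ENNReal.ofReal (|p.2| * Real.sqrt |p.2| * ‖f p.2‖) *
      ENNReal.ofReal ((|p.1 - p.2| ^ s * ‖f (p.1 - p.2)‖) * (|-p.1| ^ s * ‖f (-p.1)‖))
  let τ : ℝ × ℝ → ℝ × ℝ := fun p => (-p.2, p.1 - p.2)
  have hτ : MeasurePreserving τ := mp_tau
  have hττ : MeasurePreserving (τ ∘ τ) := hτ.comp hτ
  have hFm : Measurable F := by
    have : Measurable (fun p : ℝ × ℝ => ((Sker (p.1 - p.2) p.2 : ℝ) : ℂ)) :=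
      Complex.measurable_ofReal.comp hSm
    fun_prop
  have hHm : Measurable H := by fun_prop
  have hFi : Integrable F := by
    refine hint.mono' hFm.aestronglyMeasurable (Filter.Eventually.of_forall fun p => ?_)
    simp only [F, norm_mul, Complex.norm_real, Real.norm_eq_abs]
    gcongr
    have e : abs p.1 * abs (|p.1| ^ (2 * s)) = |p.1| ^ (2 * s + 1) := by
      rw [abs_of_nonneg (by positivity : 0 ≤ |p.1| ^ (2 * s)),
        Real.rpow_add_one' (abs_nonneg _) (by linarith), mul_comm]
    rw [e]
    have h1 : 0 ≤ |p.1 - p.2| ^ (2 * s + 1) := by positivity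
    have h2 : 0 ≤ |p.2| ^ (2 * s + 1) := by positivity
    linarith
  have hI : ∀ σ : ℝ × ℝ → ℝ × ℝ, MeasurePreserving σ → 
      Integrable (fun p => F (σ p)) ∧ ∫ p, F (σ p) = ∫ p, F p := by
    intro σ hσ
    refine ⟨hσ.integrable_comp_of_integrable hFi, ?_⟩
    rw [← integral_map_of_stronglyMeasurable hσ.measurable hFm.stronglyMeasurable, hσ.map_eq]
  obtain ⟨i1, e1⟩ := hI τ hτ
  obtain ⟨i2, e2⟩ := hI (τ ∘ τ) hττ
  have h3 : ∫ p, (F p + F (τ p) + F ((τ ∘ τ) p)) = 3 * ∫ p, F p := by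
    have i3 : Integrable (fun p => F p + F (τ p)) := hFi.add i1
    rw [integral_add i3 i2, integral_add hFi i1, e1, e2]; ring
  have hpt : ∀ p, ‖F p + F (τ p) + F ((τ ∘ τ) p)‖ₑ ≤
      ENNReal.ofReal K * (H p + H (τ p) + H ((τ ∘ τ) p)) := by
    rintro ⟨k, l⟩
    have b := sym_bound s hs (k - l) l (-k) (by ring)
    rw [← Sker_sym (k - l) l (-k) (by ring)] at b
    have s1 : Sker (-k) (k - l) = Sker (k - l) l := by
      rw [Sker_sym (k - l) l (-k) (by ring), Sker_sym (-k) (k - l) l (by ring)]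
      congr 1
      · congr 3; ring
      · ring
    have s2 : Sker l (-k) = Sker (k - l) l := by
      rw [Sker_sym (k - l) l (-k) (by ring), Sker_sym l (-k) (k - l) (by ring)]
      congr 1
      · congr 3; ring
      · ring
    have S0 : 0 ≤ Sker (k - l) l := by rw [Sker_eq]; positivity
    have q1 : -l - (k - l) = -k := by ring
    have q2 : -(k - l) - -k = l := by ring
    have eF : F (k, l) + F (τ (k, l)) + F ((τ ∘ τ) (k, l)) =
        ((-((k - l) * |k - l| ^ (2 * s) + l * |l| ^ (2 * s) + -k * |-k| ^ (2 * s)) : ℝ) : ℂ) *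
          ((Sker (k - l) l : ℝ) : ℂ) * (f (k - l) * f l * f (-k)) := by
      simp only [F, τ, Function.comp, q1, q2, s1, s2, neg_neg, abs_neg]
      push_cast
      ring
    have eH : H (k, l) + H (τ (k, l)) + H ((τ ∘ τ) (k, l)) = 
        ENNReal.ofReal ((|l| * √|l| * |k - l| ^ s * |-k| ^ s + |k - l| * √|k - l| * |-k| ^ s * |l| ^ s +
          |-k| * √|-k| * |l| ^ s * |k - l| ^ s) * (‖f (k - l)‖ * ‖f l‖ * ‖f (-k)‖)) := by
      simp only [H, τ, Function.comp, q1, q2, neg_neg]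
      rw [← ENNReal.ofReal_mul (by positivity), ← ENNReal.ofReal_mul (by positivity),
        ← ENNReal.ofReal_mul (by positivity), ← ENNReal.ofReal_add (by positivity) (by positivity),
        ← ENNReal.ofReal_add (by positivity) (by positivity)]
      congr 1; ring
    rw [eF, eH, ← ENNReal.ofReal_mul hK0.le, ← ofReal_norm]
    apply ENNReal.ofReal_le_ofReal
    rw [norm_mul, norm_mul, Complex.norm_real, Complex.norm_real, norm_mul, norm_mul, norm_neg,
      Real.norm_eq_abs, Real.norm_of_nonneg S0, ← mul_assoc K]
    rw [← hK] at b
    exact mul_le_mul_of_nonneg_right b (by positivity)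
  have hHl : ∀ σ : ℝ × ℝ → ℝ × ℝ, MeasurePreserving σ → ∫⁻ p, H (σ p) = ∫⁻ p, H p :=
    fun σ hσ => hσ.lintegral_comp hHm
  have hH := tri_lint s f hf hsi
  have hw := hL1 f hf h0 hsi'
  set X := C * (Real.sqrt (∫ k : ℝ, ‖f k‖ ^ 2)) ^ (1 - 2 / s') *
          (Real.sqrt (∫ k : ℝ, |k| ^ (2 * s') * ‖f k‖ ^ 2)) ^ (2 / s') with hX
  have hX0 : 0 ≤ X := by positivity
  set Y := (Real.sqrt (∫ k : ℝ, |k| ^ (2 * s) * ‖f k‖ ^ 2)) ^ 2 with hY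
  have hY0 : 0 ≤ Y := by positivity
  have hHX : ∫⁻ p, H p ≤ ENNReal.ofReal (X * Y) := by
    rw [ENNReal.ofReal_mul hX0]
    exact hH.trans (by gcongr)
  have fin : ENNReal.ofReal ‖3 * ∫ p, F p‖ ≤ ENNReal.ofReal (3 * (K * (X * Y))) := by
    rw [← h3, ofReal_norm]
    calc _ ≤ ∫⁻ p, ‖F p + F (τ p) + F ((τ ∘ τ) p)‖ₑ := enorm_integral_le_lintegral_enorm _
      _ ≤ ∫⁻ p, ENNReal.ofReal K * (H p + H (τ p) + H ((τ ∘ τ) p)) := lintegral_mono hpt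
      _ = ENNReal.ofReal K * (3 * ∫⁻ p, H p) := by
        have m1 : Measurable (fun p => H (τ p)) := hHm.comp hτ.measurable
        have m2 : Measurable (fun p => H ((τ ∘ τ) p)) := hHm.comp hττ.measurable
        have m3 : Measurable (fun p => H p + H (τ p) + H ((τ ∘ τ) p)) := (hHm.add m1).add m2
        rw [lintegral_const_mul _ m3, lintegral_add_right _ m2,
          lintegral_add_right _ m1, hHl τ hτ, hHl _ hττ]
        ring
      _ ≤ ENNReal.ofReal K * (3 * ENNReal.ofReal (X * Y)) := by gcongr
      _ = _ := by
        rw [ENNReal.ofReal_mul (by norm_num : (0:ℝ) ≤ 3), ENNReal.ofReal_mul hK0.le]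
        simp only [ENNReal.ofReal_ofNat]
        ring
  rw [ENNReal.ofReal_le_ofReal_iff (by positivity), norm_mul] at fin
  have : ‖∫ p, F p‖ ≤ K * (X * Y) := by
    have h33 : ‖(3:ℂ)‖ = 3 := by simp
    rw [h33] at fin
    linarith
  calc _ ≤ K * (X * Y) := this
    _ = _ := by rw [hX]; ring
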